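/- arXiv:2411.14609 — 2 statements merged into one kernel-verified Lean document; each statement's English description precedes it below -/
import Mathlib

section
/- Let A be a rooted directed tree and λ a weight such that B_λ is a bounded hypercyclic operator on c₀(A). Then B_λ supports a dense, countably generated, free hypercyclic algebra with respect to the coordinatewise product. -/
open Filter Topology
open scoped ENNReal NNReal

/-- A rooted directed tree on a vertex set `A`: a root, a parent map (with the convention
`par root = root`), such that every vertex reaches the root after finitely many steps.
This is equivalent to a connected acyclic directed graph in which every vertex other than
the root has exactly one parent and the root has none. -/
structure DirTree (A : Type*) where
  root : A
  par : A → A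
  par_root : par root = root
  reaches : ∀ v, ∃ n, par^[n] v = root

namespace DirTree
variable {A : Type*} (T : DirTree A)

/-- The set of children of a vertex. -/
def chi (v : A) : Set A := {u | u ≠ T.root ∧ T.par u = v}

/-- `chiIter n v = Chi^n(v)`, the set of `n`-th descendants of `v`. -/
def chiIter : ℕ → A → Set A
  | 0, v => {v}
  | n + 1, v => ⋃ u ∈ chiIter n v, T.chi u

/-- For `u ∈ Chi^n(v)`, `wt lam n u = λ(v → u) = ∏_{k<n} λ_{Par^k(u)}`. -/
def wt (lam : A → ℂ) (n : ℕ) (u : A) : ℂ :=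
  ∏ k ∈ Finset.range n, lam (T.par^[k] u)

/-- `B` is the weighted backward shift with weight `lam` on `ℓ^p(A)`:
`(B f)(v) = ∑_{u ∈ Chi(v)} λ_u f(u)`. -/
def IsWBS (lam : A → ℂ) {p : ℝ≥0∞} [Fact (1 ≤ p)]
    (B : lp (fun _ : A => ℂ) p →L[ℂ] lp (fun _ : A => ℂ) p) : Prop :=
  ∀ f : lp (fun _ : A => ℂ) p, ∀ v : A,
    (B f : ∀ _ : A, ℂ) v = ∑' u : T.chi v, lam u * (f : ∀ _ : A, ℂ) u

end DirTree

open scoped ZeroAtInfty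

/-!
By the Baire category theorem, a generic sequence `g` of generators works as soon as every finite
set of monomials contains some `a₀` such that, for a dense set of sequences `g`, some power of
`B_λ` nearly sends the monomial `a₀` to a prescribed `y` and the other ones nearly to zero: that
power then brings every combination in which `a₀` occurs close to an arbitrary vector.

A dense set arises by perturbing finitely supported sequences. High powers of `B_λ` annihilate the
finitely supported part because the tree is rooted, while hypercyclicity makes the total path
weight over each vertex arbitrarily large, so that `y` has arbitrarily small preimages. The
monomial `a₀` is the one of least weighted degree, for positive integer weights of the variables
that give distinct degrees to the finitely many monomials.
-/

section Universality

variable {X Z κ ι : Type*} [TopologicalSpace X] [TopologicalSpace Z]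

theorem eventually_residual_subset_closure_range [SecondCountableTopology Z] {Φ : κ → X → Z}
    (hΦ : ∀ n, Continuous (Φ n)) {Y : Set Z}
    (hY : ∀ y ∈ Y, ∀ V ∈ 𝓝 y, Dense {x | ∃ n, Φ n x ∈ V}) :
    ∀ᶠ x in residual X, Y ⊆ closure (Set.range fun n => Φ n x) := by
  have hbasis : ∀ V ∈ TopologicalSpace.countableBasis Z, ∀ᶠ x in residual X,
      (V ∩ Y).Nonempty → ∃ n, Φ n x ∈ V := by
    intro V hV
    have hVo := TopologicalSpace.isOpen_of_mem_countableBasis hV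
    have hopen : IsOpen {x | ∃ n, Φ n x ∈ V} := by
      rw [Set.ofPred_exists]
      exact isOpen_iUnion fun n => hVo.preimage (hΦ n)
    by_cases hVY : (V ∩ Y).Nonempty
    · obtain ⟨y, hyV, hyY⟩ := hVY
      filter_upwards [residual_of_dense_open hopen (hY y hyY V (hVo.mem_nhds hyV))] with x hx _
      exact hx
    · exact .of_forall fun _ h => absurd h hVY
  filter_upwards [(eventually_countable_ball
    (TopologicalSpace.countable_countableBasis Z)).2 hbasis] with x hx y hy
  refine (TopologicalSpace.isBasis_countableBasis Z).mem_closure_iff.2 fun V hV hyV => ?_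
  obtain ⟨n, hn⟩ := hx V hV ⟨y, hyV, hy⟩
  exact ⟨_, hn, n, rfl⟩

theorem tendsto_update_cofinite [DecidableEq ι] (g : ι → Z) (z : Z) :
    Tendsto (fun i => Function.update g i z) cofinite (𝓝 g) := by
  refine tendsto_pi_nhds.2 fun j => tendsto_nhds_of_eventually_eq ?_
  filter_upwards [(Set.finite_singleton j).compl_mem_cofinite] with i hij
  exact Function.update_of_ne (Ne.symm hij) z g

theorem eventually_residual_denseRange [Infinite ι] [SecondCountableTopology Z] :
    ∀ᶠ g : ι → Z in residual _, DenseRange g := by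
  classical
  have hdense (y : Z) (_ : y ∈ Set.univ) (V : Set Z) (hV : V ∈ 𝓝 y) :
      Dense {g : ι → Z | ∃ i, g i ∈ V} := fun g =>
    mem_closure_of_tendsto (tendsto_update_cofinite g y) <| .of_forall fun i =>
      ⟨i, by simpa only [Function.update_self] using mem_of_mem_nhds hV⟩
  filter_upwards [eventually_residual_subset_closure_range continuous_apply hdense] with g hg
  exact fun z => hg (Set.mem_univ z)

theorem dense_image_Ici [T1Space Z] [∀ z : Z, NeBot (𝓝[≠] z)] {u : ℕ → Z} (hu : DenseRange u)
    (N : ℕ) : Dense (u '' Set.Ici N) := by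
  refine (hu.sdiff_finite ((Set.finite_Iio N).image u)).mono ?_
  rintro _ ⟨⟨n, rfl⟩, hn⟩
  exact ⟨n, Set.mem_Ici.2 (not_lt.1 fun h => hn ⟨n, h, rfl⟩), rfl⟩

variable {𝕜 E F : Type*} [Field 𝕜] [AddCommGroup E] [Module 𝕜 E]
  [AddCommGroup F] [Module 𝕜 F] [TopologicalSpace F]

theorem denseRange_apply_sum_smul [ContinuousAdd F] [ContinuousConstSMul 𝕜 F] [Fintype ι]
    [DecidableEq ι] {T : κ → E →ₗ[𝕜] F} {m : ι → E} {a₀ : ι}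
    (ha₀ : ∀ y, Pi.single a₀ y ∈ closure (Set.range fun n a => T n (m a)))
    {c : ι → 𝕜} (hc : c a₀ ≠ 0) : DenseRange fun n => T n (∑ a, c a • m a) := by
  intro y
  have hcont : Continuous fun z : ι → F => ∑ a, c a • z a := by fun_prop
  have hy : ∑ a, c a • (Pi.single a₀ ((c a₀)⁻¹ • y) : ι → F) a = y := by
    rw [Fintype.sum_eq_single a₀ fun a ha => by rw [Pi.single_eq_of_ne ha, smul_zero],
      Pi.single_eq_same, smul_inv_smul₀ hc]
  rw [← hy]
  refine closure_mono ?_ (image_closure_subset_closure_image hcont ⟨_, ha₀ _, rfl⟩)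
  rintro _ ⟨_, ⟨n, rfl⟩, rfl⟩
  exact ⟨n, by simp only [map_sum, map_smul]⟩

theorem linearIndependent_of_denseRange_linearCombination [T1Space F] [Nontrivial F]
    {T : κ → E →ₗ[𝕜] F} {m : ι → E}
    (hm : ∀ c : ι →₀ 𝕜, c ≠ 0 → DenseRange fun n => T n (Finsupp.linearCombination 𝕜 m c)) :
    LinearIndependent 𝕜 m := by
  refine linearIndependent_iff.2 fun c hc => by_contra fun hc0 => ?_
  have hzero := hm c hc0
  simp only [hc, map_zero] at hzero
  have hdense : Dense ({0} : Set F) := hzero.mono Set.range_const_subset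
  exact Set.singleton_ne_univ (0 : F) (by rw [← hdense.closure_eq, closure_singleton])

theorem eventually_residual_denseRange_linearCombination [TopologicalSpace E]
    [ContinuousAdd F] [ContinuousConstSMul 𝕜 F] [SecondCountableTopology F] [Countable ι]
    [DecidableEq ι] {T : κ → E →L[𝕜] F} {M : X → ι → E} (hM : ∀ a, Continuous fun x => M x a)
    {Y : Set F} (hY : Dense Y)
    (hTM : ∀ I : Finset ι, I.Nonempty → ∃ a₀ : I, ∀ y ∈ Y,
      ∀ V ∈ 𝓝 (Pi.single a₀ y : I → F), Dense {x | ∃ n, (fun a : I => T n (M x a)) ∈ V}) :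
    ∀ᶠ x in residual X, ∀ c : ι →₀ 𝕜, c ≠ 0 →
      DenseRange fun n => T n (Finsupp.linearCombination 𝕜 (M x) c) := by
  have hsingle (I : Finset ι) (hI : I.Nonempty) : ∀ᶠ x in residual X, ∃ a₀ : I, ∀ y : F,
      Pi.single a₀ y ∈ closure (Set.range fun n (a : I) => T n (M x a)) := by
    obtain ⟨a₀, ha₀⟩ := hTM I hI
    filter_upwards [eventually_residual_subset_closure_range
      (fun n => continuous_pi fun a : I => (T n).continuous.comp (hM a))
      (Set.forall_mem_image.2 ha₀)] with x hx
    refine ⟨a₀, fun y => closure_minimal hx isClosed_closure ?_⟩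
    exact image_closure_subset_closure_image (continuous_single a₀) ⟨y, hY y, rfl⟩
  filter_upwards [eventually_countable_forall.2 fun I =>
    eventually_countable_forall.2 (hsingle I)] with x hx c hc
  obtain ⟨a₀, ha₀⟩ := hx c.support (Finsupp.support_nonempty_iff.2 hc)
  have hsum : Finsupp.linearCombination 𝕜 (M x) c =
      ∑ a : c.support, c a • M x a := by
    rw [Finsupp.linearCombination_apply, Finsupp.sum, ← Finset.sum_coe_sort]
  rw [hsum]
  exact denseRange_apply_sum_smul (T := fun n => (T n : E →ₗ[𝕜] F)) (c := fun a : c.support => c a)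
    ha₀ (Finsupp.mem_support_iff.1 a₀.2)

end Universality

section Weights

variable {σ : Type*}

theorem eval_weight_X (x : σ → ℤ) (a : σ →₀ ℕ) :
    MvPolynomial.eval x (Finsupp.weight MvPolynomial.X a) = Finsupp.weight x a := by
  simp only [Finsupp.weight_apply, Finsupp.sum, map_sum, map_nsmul, MvPolynomial.eval_X]

theorem injective_weight_X : Function.Injective
    (Finsupp.weight MvPolynomial.X : (σ →₀ ℕ) →+ MvPolynomial σ ℤ) := by
  classical
  intro a b hab
  ext i
  have heval := congrArg (MvPolynomial.eval (Pi.single i 1)) hab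
  simpa only [eval_weight_X, Finsupp.weight_single_index, nsmul_one, Nat.cast_inj] using heval

theorem exists_pos_weight_injOn (I : Finset (σ →₀ ℕ)) :
    ∃ w : σ → ℕ, (∀ i, 0 < w i) ∧ Set.InjOn (Finsupp.weight (R := ℕ) w) I := by
  classical
  -- The weights are a positive integer point off the hyperplanes where two of the linear forms
  -- `∑ i, a i * X i`, `a ∈ I`, agree.
  set P : MvPolynomial σ ℤ := ∏ p ∈ I.offDiag,
    (Finsupp.weight MvPolynomial.X p.1 - Finsupp.weight MvPolynomial.X p.2)
  have hP : P ≠ 0 := Finset.prod_ne_zero_iff.2 fun p hp =>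
    sub_ne_zero.2 (injective_weight_X.ne (Finset.mem_offDiag.1 hp).2.2)
  have hpos : (Set.Ioi (0 : ℤ)).Infinite := Set.Ioi_infinite 0
  obtain ⟨x, hx, hPx⟩ : ∃ x ∈ Set.univ.pi fun _ : σ => Set.Ioi (0 : ℤ),
      MvPolynomial.eval x P ≠ 0 := by
    by_contra! h
    exact hP (MvPolynomial.funext_set _ (fun _ => hpos) fun x hx => by rw [h x hx, map_zero])
  lift x to σ → ℕ using fun i => (hx i trivial).le
  refine ⟨x, fun i => by simpa using hx i trivial, fun a ha b hb hab => ?_⟩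
  by_contra hne
  refine hPx ?_
  have heval (c : σ →₀ ℕ) : MvPolynomial.eval (fun i => (x i : ℤ))
      (Finsupp.weight MvPolynomial.X c) = (Finsupp.weight x c : ℕ) := by
    rw [eval_weight_X]
    simp [Finsupp.weight_apply, Finsupp.sum]
  rw [MvPolynomial.eval_prod]
  refine Finset.prod_eq_zero (Finset.mem_offDiag.2 ⟨ha, hb, hne⟩ : (a, b) ∈ I.offDiag) ?_
  rw [map_sub, heval, heval, hab, sub_self]

end Weights

section ZeroAtInfty

variable {A β ι : Type*} [TopologicalSpace A]

section Norm

variable [SeminormedAddCommGroup β]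

theorem c0_norm_le {f : C₀(A, β)} {C : ℝ} (hC : 0 ≤ C) : ‖f‖ ≤ C ↔ ∀ v, ‖f v‖ ≤ C := by
  rw [← ZeroAtInftyContinuousMap.norm_toBCF_eq_norm, BoundedContinuousFunction.norm_le hC]
  rfl

theorem c0_norm_apply_le (f : C₀(A, β)) (v : A) : ‖f v‖ ≤ ‖f‖ :=
  (c0_norm_le (norm_nonneg f)).1 le_rfl v

theorem c0_sum_apply (s : Finset ι) (f : ι → C₀(A, β)) (v : A) :
    (∑ i ∈ s, f i) v = ∑ i ∈ s, f i v :=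
  map_sum ({ toFun := fun f => f v, map_zero' := rfl, map_add' := fun _ _ => rfl } :
    C₀(A, β) →+ β) f s

end Norm

section FiniteRestrict

variable [DiscreteTopology A]

/-- The function that agrees with `φ` on the finite set `S` and vanishes elsewhere, as an element
of `C₀(A, β)`. The point mass at `u` is `finiteRestrict {u} 1`. -/
noncomputable def finiteRestrict [TopologicalSpace β] [Zero β] (S : Finset A) (φ : A → β) :
    C₀(A, β) where
  toFun := (S : Set A).indicator φ
  continuous_toFun := continuous_of_discreteTopology
  zero_at_infty' := by
    rw [cocompact_eq_cofinite]
    refine tendsto_nhds_of_eventually_eq ?_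
    filter_upwards [S.finite_toSet.compl_mem_cofinite] with v hv
    exact Set.indicator_of_notMem hv φ

theorem finiteRestrict_apply [TopologicalSpace β] [Zero β] (S : Finset A) (φ : A → β) (v : A) :
    finiteRestrict S φ v = (S : Set A).indicator φ v := rfl

theorem tendsto_finiteRestrict [PseudoMetricSpace β] [Zero β] (f : C₀(A, β)) :
    Tendsto (fun S => finiteRestrict S f) atTop (𝓝 f) := by
  rw [ZeroAtInftyContinuousMap.tendsto_iff_tendstoUniformly, Metric.tendstoUniformly_iff]
  intro ε hε
  have hcof : ∀ᶠ v in cofinite, dist (f v) 0 < ε := by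
    rw [← cocompact_eq_cofinite A]
    exact Metric.tendsto_nhds.1 (zero_at_infty f) ε hε
  filter_upwards [eventually_ge_atTop (Set.Finite.toFinset hcof)] with S hS v
  rw [finiteRestrict_apply]
  by_cases hv : v ∈ S
  · rwa [Set.indicator_of_mem (Finset.mem_coe.2 hv), dist_self]
  · rw [Set.indicator_of_notMem (Finset.mem_coe.not.2 hv)]
    exact by_contra fun h => hv (hS (hcof.mem_toFinset.2 h))

theorem dense_setOf_finiteRestrict [PseudoMetricSpace β] [Zero β] :
    Dense {h : ι → C₀(A, β) | ∃ (S : Finset A) (φ : ι → A → β),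
      h = fun i => finiteRestrict S (φ i)} := fun h =>
  mem_closure_of_tendsto (tendsto_pi_nhds.2 fun i => tendsto_finiteRestrict (h i)) <|
    .of_forall fun S => ⟨S, fun i => h i, rfl⟩

theorem dense_range_finiteRestrict [PseudoMetricSpace β] [Zero β] :
    DenseRange fun p : Finset A × (A → β) => finiteRestrict p.1 p.2 := fun f =>
  mem_closure_of_tendsto (tendsto_finiteRestrict f) <| .of_forall fun S => ⟨(S, f), rfl⟩

theorem norm_finiteRestrict_le [SeminormedAddCommGroup β] (S : Finset A) {φ : A → β} {C : ℝ}
    (hC : 0 ≤ C) (hφ : ∀ v ∈ S, ‖φ v‖ ≤ C) : ‖finiteRestrict S φ‖ ≤ C := by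
  refine (c0_norm_le hC).2 fun v => ?_
  rw [finiteRestrict_apply]
  by_cases hv : v ∈ S
  · rw [Set.indicator_of_mem (Finset.mem_coe.2 hv)]
    exact hφ v hv
  · rwa [Set.indicator_of_notMem (Finset.mem_coe.not.2 hv), norm_zero]

theorem finiteRestrict_eq_sum_smul [SeminormedRing β] (S : Finset A) (φ : A → β) :
    finiteRestrict S φ = ∑ u ∈ S, φ u • finiteRestrict {u} 1 := by
  classical
  ext v
  simp [c0_sum_apply, finiteRestrict_apply, Set.indicator_apply]

instance c0_nontrivial [Nonempty A] [TopologicalSpace β] [Zero β] [Nontrivial β] :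
    Nontrivial C₀(A, β) := by
  obtain ⟨b, hb⟩ := exists_ne (0 : β)
  obtain ⟨v⟩ := ‹Nonempty A›
  refine ⟨finiteRestrict {v} fun _ => b, 0, fun h => hb ?_⟩
  simpa [finiteRestrict_apply] using DFunLike.congr_fun h v

end FiniteRestrict

section Monomial

/-- The monomial `∏ i, (g i) ^ (a i)` of positive degree in a family `g` of functions in
`C₀(A, β)`. The constant monomial `a = 0` is excluded because it does not vanish at infinity. -/
noncomputable def c0Monomial [TopologicalSpace β] [CommMonoidWithZero β] [ContinuousMul β]
    (g : ι → C₀(A, β)) (a : {a : ι →₀ ℕ // a ≠ 0}) : C₀(A, β) where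
  toFun v := ∏ i ∈ a.1.support, g i v ^ a.1 i
  continuous_toFun := continuous_finsetProd _ fun i _ => (map_continuous (g i)).pow _
  zero_at_infty' := by
    obtain ⟨i, hi⟩ := Finsupp.support_nonempty_iff.2 a.2
    have hlim := tendsto_finsetProd a.1.support fun i _ => (zero_at_infty (g i)).pow (a.1 i)
    rwa [Finset.prod_eq_zero hi (zero_pow (Finsupp.mem_support_iff.1 hi))] at hlim

section

variable [TopologicalSpace β] [CommMonoidWithZero β] [ContinuousMul β]

theorem c0Monomial_apply (g : ι → C₀(A, β)) (a : {a : ι →₀ ℕ // a ≠ 0}) (v : A) :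
    c0Monomial g a v = ∏ i ∈ a.1.support, g i v ^ a.1 i := rfl

theorem c0Monomial_single_one (g : ι → C₀(A, β)) (i : ι) :
    c0Monomial g ⟨Finsupp.single i 1, Finsupp.single_ne_zero.2 one_ne_zero⟩ = g i := by
  ext v
  rw [c0Monomial_apply]
  simp

theorem c0Monomial_finiteRestrict_pow [DiscreteTopology A] (S : Finset A) (τ : A → β)
    (w : ι → ℕ) (a : {a : ι →₀ ℕ // a ≠ 0}) :
    c0Monomial (fun i => finiteRestrict S (τ ^ w i)) a =
      finiteRestrict S (τ ^ Finsupp.weight w a.1) := by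
  ext v
  simp only [c0Monomial_apply, finiteRestrict_apply]
  by_cases hv : v ∈ (S : Set A)
  · simp only [Set.indicator_of_mem hv, Pi.pow_apply, ← pow_mul, Finset.prod_pow_eq_pow_sum,
      Finsupp.weight_apply, Finsupp.sum, smul_eq_mul, mul_comm]
  · obtain ⟨i, hi⟩ := Finsupp.support_nonempty_iff.2 a.2
    simp only [Set.indicator_of_notMem hv]
    exact Finset.prod_eq_zero hi (zero_pow (Finsupp.mem_support_iff.1 hi))

end

theorem continuous_c0Monomial [SeminormedCommRing β] (a : {a : ι →₀ ℕ // a ≠ 0}) :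
    Continuous fun g : ι → C₀(A, β) => c0Monomial g a := by
  have hiso := ZeroAtInftyContinuousMap.isometry_toBCF (α := A) (β := β)
  rw [hiso.isUniformInducing.isInducing.continuous_iff]
  have hprod : (ZeroAtInftyContinuousMap.toBCF ∘ fun g : ι → C₀(A, β) => c0Monomial g a) =
      fun g => ∏ i ∈ a.1.support, (g i).toBCF ^ a.1 i := by
    ext g v
    simp only [BoundedContinuousFunction.prod_apply, BoundedContinuousFunction.pow_apply]
    rfl
  rw [hprod]
  exact continuous_finsetProd _ fun i _ => (hiso.continuous.comp (continuous_apply i)).pow _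

end Monomial

end ZeroAtInfty

theorem exists_sum_mul_eq_of_norm_le {𝕜 α : Type*} [RCLike 𝕜] (s : Finset α) (c : α → 𝕜) {y : 𝕜}
    {δ : ℝ} (hδ : 0 ≤ δ) (hy : ‖y‖ ≤ δ * ∑ u ∈ s, ‖c u‖) :
    ∃ z : α → 𝕜, (∀ u, ‖z u‖ ≤ δ) ∧ ∑ u ∈ s, c u * z u = y ∧ ∑ u ∈ s, ‖c u * z u‖ = ‖y‖ := by
  set σ := ∑ u ∈ s, ‖c u‖ with hσ_def
  have hσ : 0 ≤ σ := Finset.sum_nonneg fun _ _ => norm_nonneg _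
  have hcancel : ‖y‖ / σ * σ = ‖y‖ := div_mul_cancel_of_imp fun h => by
    simpa only [h, mul_zero, norm_le_zero_iff, norm_eq_zero] using hy
  have hmul (u : α) : c u * (y / σ * (‖c u‖ / c u)) = y / σ * (‖c u‖ : 𝕜) := by
    rw [mul_left_comm, mul_div_cancel_of_imp']
    exact fun h => by rw [h, norm_zero, RCLike.ofReal_zero]
  refine ⟨fun u => y / σ * (‖c u‖ / c u), fun u => ?_, ?_, ?_⟩
  · rw [norm_mul, norm_div, norm_div, RCLike.norm_ofReal, RCLike.norm_ofReal, abs_norm,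
      abs_of_nonneg hσ]
    exact (mul_le_of_le_one_right (by positivity) (div_self_le_one _)).trans
      (div_le_of_le_mul₀ hσ hδ hy)
  · simp only [hmul, ← Finset.mul_sum, ← RCLike.ofReal_sum, ← hσ_def]
    refine div_mul_cancel_of_imp fun h => ?_
    have := RCLike.ofReal_eq_zero.1 h
    simpa only [this, mul_zero, norm_le_zero_iff] using hy
  · simp only [hmul, norm_mul, norm_div, RCLike.norm_ofReal, abs_norm, abs_of_nonneg hσ,
      ← Finset.mul_sum, ← hσ_def, hcancel]

namespace DirTree

variable {A : Type*} (T : DirTree A)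

/-- The path weight `λ(v → u)` with `v = par^n u`, set to zero when `u` has depth less than `n`:
`par` fixes the root, so `wt` alone would keep multiplying by the weight of the root. -/
noncomputable def pathWeight (lam : A → ℂ) (n : ℕ) (u : A) : ℂ :=
  T.wt (({T.root}ᶜ : Set A).indicator lam) n u

theorem pathWeight_succ (lam : A → ℂ) (n : ℕ) (u : A) :
    T.pathWeight lam (n + 1) u =
      ({T.root}ᶜ : Set A).indicator lam u * T.pathWeight lam n (T.par u) := by
  simp only [pathWeight, wt, Finset.prod_range_succ', Function.iterate_succ_apply,
    Function.iterate_zero_apply, mul_comm]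

theorem eventually_pathWeight_eq_zero (lam : A → ℂ) (S : Finset A) :
    ∀ᶠ n in atTop, ∀ u ∈ S, T.pathWeight lam n u = 0 := by
  refine (Filter.eventually_all_finset S).2 fun u _ => ?_
  obtain ⟨N, hN⟩ := T.reaches u
  filter_upwards [eventually_gt_atTop N] with n hn
  exact Finset.prod_eq_zero (Finset.mem_range.2 hn)
    (Set.indicator_of_notMem (fun h : T.par^[N] u ∈ ({T.root}ᶜ : Set A) => h hN) lam)

variable [TopologicalSpace A]

/-- `B` is the weighted backward shift `B_λ` with weight `lam` on `c₀(A)`, the counterpart of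
`IsWBS` for `p = ∞`. -/
def IsC0WBS (lam : A → ℂ) (B : C₀(A, ℂ) →L[ℂ] C₀(A, ℂ)) : Prop :=
  ∀ (f : C₀(A, ℂ)) (v : A), B f v = ∑' u : T.chi v, lam u * f u

variable [DiscreteTopology A] {T} {lam : A → ℂ} {B : C₀(A, ℂ) →L[ℂ] C₀(A, ℂ)}

theorem IsC0WBS.apply_finiteRestrict_singleton (hB : T.IsC0WBS lam B) (u : A) :
    B (finiteRestrict {u} 1) =
      ({T.root}ᶜ : Set A).indicator lam u • finiteRestrict {T.par u} 1 := by
  classical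
  ext v
  have hchi : ∀ w : T.chi v, lam w * finiteRestrict {u} 1 (w : A) =
      if (w : A) = u then lam u else 0 := fun w => by
    by_cases h : (w : A) = u <;> simp [finiteRestrict_apply, h]
  rw [hB, tsum_congr hchi]
  by_cases hu : u ∈ T.chi v
  · rw [tsum_eq_single (⟨u, hu⟩ : T.chi v) fun w hw => if_neg fun h => hw (Subtype.ext h)]
    simp [finiteRestrict_apply, hu.1, hu.2]
  · have hne : ∀ w : T.chi v, (w : A) ≠ u := fun w h => hu (h ▸ w.2)
    have hroot : v = T.par u → u = T.root := fun h => by_contra fun hr => hu ⟨hr, h.symm⟩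
    simp only [hne, if_false, tsum_zero]
    by_cases hr : u = T.root
    · simp [hr]
    · simp [finiteRestrict_apply, mt hroot hr]

theorem IsC0WBS.pow_apply_finiteRestrict_singleton (hB : T.IsC0WBS lam B) (n : ℕ) (u : A) :
    (B ^ n) (finiteRestrict {u} 1) =
      T.pathWeight lam n u • finiteRestrict {T.par^[n] u} 1 := by
  induction n generalizing u with
  | zero => simp [pathWeight, wt]
  | succ n ih =>
    rw [pow_succ, mul_apply_eq_comp, hB.apply_finiteRestrict_singleton, map_smul, ih,
      pathWeight_succ, smul_smul, Function.iterate_succ_apply]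

theorem IsC0WBS.pow_apply_finiteRestrict [DecidableEq A] (hB : T.IsC0WBS lam B) (n : ℕ)
    (S : Finset A) (φ : A → ℂ) (v : A) :
    (B ^ n) (finiteRestrict S φ) v = ∑ u ∈ S with T.par^[n] u = v, T.pathWeight lam n u * φ u := by
  rw [finiteRestrict_eq_sum_smul, map_sum, c0_sum_apply, Finset.sum_filter]
  refine Finset.sum_congr rfl fun u _ => ?_
  rw [map_smul, hB.pow_apply_finiteRestrict_singleton]
  simp [finiteRestrict_apply, Set.indicator_apply, mul_comm, eq_comm]

theorem IsC0WBS.pow_apply_congr (hB : T.IsC0WBS lam B) {n : ℕ} {f f' : C₀(A, ℂ)}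
    (hff' : ∀ u, T.pathWeight lam n u ≠ 0 → f u = f' u) : (B ^ n) f = (B ^ n) f' := by
  classical
  have hrestrict : ∀ S : Finset A,
      (B ^ n) (finiteRestrict S f) = (B ^ n) (finiteRestrict S f') := fun S => by
    ext v
    rw [hB.pow_apply_finiteRestrict, hB.pow_apply_finiteRestrict]
    refine Finset.sum_congr rfl fun u _ => ?_
    by_cases hu : T.pathWeight lam n u = 0
    · rw [hu, zero_mul, zero_mul]
    · rw [hff' u hu]
  have hlim (f : C₀(A, ℂ)) := ((B ^ n).continuous.tendsto f).comp (tendsto_finiteRestrict f)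
  exact tendsto_nhds_unique (hlim f) ((hlim f').congr fun S => (hrestrict S).symm)

theorem IsC0WBS.exists_le_sum_norm_pathWeight [DecidableEq A] (hB : T.IsC0WBS lam B)
    {f : C₀(A, ℂ)} (hf : DenseRange fun n : ℕ => (B ^ n) f) (F : Finset A) (K : ℝ) (N : ℕ) :
    ∃ n ≥ N, ∃ S : Finset A, ∀ v ∈ F, K ≤ ∑ u ∈ S with T.par^[n] u = v, ‖T.pathWeight lam n u‖ := by
  have : Nonempty A := ⟨T.root⟩
  have := fun g : C₀(A, ℂ) => Module.punctured_nhds_neBot ℂ C₀(A, ℂ) g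
  set t : C₀(A, ℂ) := finiteRestrict F fun _ => ((K * ‖f‖ + 1 : ℝ) : ℂ)
  obtain ⟨_, ⟨n, hn, rfl⟩, hnt⟩ := (dense_image_Ici hf N).exists_dist_lt t one_pos
  have hlim := ((B ^ n).continuous.tendsto f).comp (tendsto_finiteRestrict f)
  obtain ⟨S, hS⟩ := ((tendsto_const_nhds.dist hlim).eventually_lt_const hnt).exists
  refine ⟨n, hn, S, fun v hv => ?_⟩
  have hupper : ‖(B ^ n) (finiteRestrict S f) v‖ ≤
      (∑ u ∈ S with T.par^[n] u = v, ‖T.pathWeight lam n u‖) * ‖f‖ := by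
    rw [hB.pow_apply_finiteRestrict, Finset.sum_mul]
    refine norm_sum_le_of_le _ fun u _ => ?_
    rw [norm_mul]
    gcongr
    exact c0_norm_apply_le f u
  have hclose : ‖t v - (B ^ n) (finiteRestrict S f) v‖ < 1 :=
    (c0_norm_apply_le (t - (B ^ n) (finiteRestrict S f)) v).trans_lt (by rwa [← dist_eq_norm])
  have hlower : K * ‖f‖ + 1 ≤ ‖t v‖ := by
    rw [finiteRestrict_apply, Set.indicator_of_mem (Finset.mem_coe.2 hv), Complex.norm_real]
    exact le_abs_self _
  have htriangle := norm_le_norm_add_norm_sub' (t v) ((B ^ n) (finiteRestrict S f) v)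
  exact (lt_of_mul_lt_mul_right (by linarith) (norm_nonneg f)).le

/-- Each fibre carries total path weight at least `‖y‖ / δ`, over which the value of `y` is spread
with phases chosen so that no cancellation occurs. -/
theorem IsC0WBS.exists_small_preimage [DecidableEq A] (hB : T.IsC0WBS lam B)
    {f : C₀(A, ℂ)} (hf : DenseRange fun n : ℕ => (B ^ n) f) (F : Finset A) (y : A → ℂ)
    {δ : ℝ} (hδ : 0 < δ) (N : ℕ) :
    ∃ n ≥ N, ∃ (S : Finset A) (z : A → ℂ), (∀ u, ‖z u‖ ≤ δ) ∧
      (B ^ n) (finiteRestrict S z) = finiteRestrict F y ∧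
      ∀ v, ∑ u ∈ S with T.par^[n] u = v, ‖T.pathWeight lam n u * z u‖ = ‖finiteRestrict F y v‖ := by
  obtain ⟨n, hn, S, hS⟩ :=
    hB.exists_le_sum_norm_pathWeight hf F (‖finiteRestrict F y‖ / δ) N
  have hfibre (v : A) : ‖finiteRestrict F y v‖ ≤
      δ * ∑ u ∈ S with T.par^[n] u = v, ‖T.pathWeight lam n u‖ := by
    by_cases hv : v ∈ F
    · exact (c0_norm_apply_le _ v).trans ((div_le_iff₀' hδ).1 (hS v hv))
    · rw [finiteRestrict_apply, Set.indicator_of_notMem (Finset.mem_coe.not.2 hv), norm_zero]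
      positivity
  choose z hzδ hzy hznorm using fun v => exists_sum_mul_eq_of_norm_le _ _ hδ.le (hfibre v)
  refine ⟨n, hn, S, fun u => z (T.par^[n] u) u, fun u => hzδ _ u, ?_, fun v => ?_⟩
  · ext v
    rw [hB.pow_apply_finiteRestrict, ← hzy v]
    exact Finset.sum_congr rfl fun u hu => by simp only [(Finset.mem_filter.1 hu).2]
  · rw [← hznorm v]
    exact Finset.sum_congr rfl fun u hu => by simp only [(Finset.mem_filter.1 hu).2]

theorem IsC0WBS.norm_pow_apply_finiteRestrict_pow_le [DecidableEq A] (hB : T.IsC0WBS lam B)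
    {n m k : ℕ} (hmk : m < k) {S : Finset A} {τ : A → ℂ} {η C : ℝ} (hη0 : 0 ≤ η) (hη1 : η ≤ 1)
    (hC : 0 ≤ C) (hτ : ∀ u, ‖τ u‖ ≤ η)
    (hsum : ∀ v, ∑ u ∈ S with T.par^[n] u = v, ‖T.pathWeight lam n u * τ u ^ m‖ ≤ C) :
    ‖(B ^ n) (finiteRestrict S (τ ^ k))‖ ≤ η * C := by
  refine (c0_norm_le (by positivity)).2 fun v => ?_
  have hpow (u : A) : ‖τ u‖ ^ (k - m) ≤ η :=
    (pow_le_of_le_one (norm_nonneg _) ((hτ u).trans hη1) (Nat.sub_ne_zero_of_lt hmk)).trans (hτ u)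
  calc ‖(B ^ n) (finiteRestrict S (τ ^ k)) v‖
      ≤ ∑ u ∈ S with T.par^[n] u = v, η * ‖T.pathWeight lam n u * τ u ^ m‖ := by
        rw [hB.pow_apply_finiteRestrict]
        refine norm_sum_le_of_le _ fun u _ => ?_
        rw [Pi.pow_apply, ← Nat.sub_add_cancel hmk.le, pow_add, mul_left_comm, norm_mul, norm_pow]
        gcongr
        exact hpow u
    _ ≤ η * C := by
        rw [← Finset.mul_sum]
        gcongr
        exact hsum v

variable {ι : Type*}

/-- The perturbations are `x i = τ ^ w i`, which turns every monomial `a` into `τ ^ weight w a`,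
with `τ ^ weight w a₀` a small preimage of `y`. -/
theorem IsC0WBS.exists_perturbation (hB : T.IsC0WBS lam B)
    {f : C₀(A, ℂ)} (hf : DenseRange fun n : ℕ => (B ^ n) f) {w : ι → ℕ} (hw : ∀ i, 0 < w i)
    (a₀ : {a : ι →₀ ℕ // a ≠ 0}) (H F : Finset A) (h : ι → A → ℂ) (y : A → ℂ)
    {η : ℝ} (hη0 : 0 < η) (hη1 : η ≤ 1) :
    ∃ (n : ℕ) (x : ι → C₀(A, ℂ)), (∀ i, ‖x i‖ ≤ η) ∧
      (B ^ n) (c0Monomial ((fun i => finiteRestrict H (h i)) + x) a₀) = finiteRestrict F y ∧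
      ∀ a, Finsupp.weight w a₀.1 < Finsupp.weight w a.1 →
        ‖(B ^ n) (c0Monomial ((fun i => finiteRestrict H (h i)) + x) a)‖ ≤
          η * ‖finiteRestrict F y‖ := by
  classical
  have hm : Finsupp.weight w a₀.1 ≠ 0 := by
    have := Finsupp.nonTorsionWeight_of ℕ w fun i => (hw i).ne'
    exact (Finsupp.weight_eq_zero_iff_eq_zero w).not.2 a₀.2
  obtain ⟨N, hN⟩ := eventually_atTop.1 (T.eventually_pathWeight_eq_zero lam H)
  obtain ⟨n, hn, S, z, hzη, hzy, hznorm⟩ :=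
    hB.exists_small_preimage hf F y (pow_pos hη0 (Finsupp.weight w a₀.1)) N
  obtain ⟨τ, rfl⟩ : ∃ τ : A → ℂ, τ ^ Finsupp.weight w a₀.1 = z := by
    choose τ hτ using fun u => IsAlgClosed.exists_pow_nat_eq (z u) (Nat.pos_of_ne_zero hm)
    exact ⟨τ, funext hτ⟩
  have hτ (u : A) : ‖τ u‖ ≤ η :=
    le_of_pow_le_pow_left₀ hm hη0.le (by simpa only [Pi.pow_apply, norm_pow] using hzη u)
  set x : ι → C₀(A, ℂ) := fun i => finiteRestrict S (τ ^ w i) with hx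
  have hx_norm (i : ι) : ‖x i‖ ≤ η := norm_finiteRestrict_le S hη0.le fun u _ => by
    rw [Pi.pow_apply, norm_pow]
    exact (pow_le_of_le_one (norm_nonneg _) ((hτ u).trans hη1) (hw i).ne').trans (hτ u)
  have hpow (a : {a : ι →₀ ℕ // a ≠ 0}) :
      (B ^ n) (c0Monomial ((fun i => finiteRestrict H (h i)) + x) a) =
        (B ^ n) (finiteRestrict S (τ ^ Finsupp.weight w a.1)) := by
    rw [← c0Monomial_finiteRestrict_pow, ← hx]
    refine hB.pow_apply_congr fun u hu => ?_
    have huH : u ∉ (H : Set A) := fun huH => hu (hN n hn u huH)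
    simp only [c0Monomial_apply, Pi.add_apply, ZeroAtInftyContinuousMap.add_apply,
      finiteRestrict_apply H, Set.indicator_of_notMem huH, zero_add]
  refine ⟨n, x, hx_norm, (hpow a₀).trans hzy, fun a ha => ?_⟩
  rw [hpow]
  exact hB.norm_pow_apply_finiteRestrict_pow_le ha hη0.le hη1 (norm_nonneg _) hτ fun v =>
    (hznorm v).trans_le (c0_norm_apply_le _ v)

theorem IsC0WBS.dense_exists_pow_c0Monomial_mem [DecidableEq ι] (hB : T.IsC0WBS lam B)
    {f : C₀(A, ℂ)} (hf : DenseRange fun n : ℕ => (B ^ n) f)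
    {I : Finset {a : ι →₀ ℕ // a ≠ 0}} {w : ι → ℕ} (hw : ∀ i, 0 < w i) {a₀ : I}
    (ha₀ : ∀ a : I, a ≠ a₀ → Finsupp.weight w a₀.1.1 < Finsupp.weight w a.1.1)
    (F : Finset A) (y : A → ℂ) {V : Set (I → C₀(A, ℂ))}
    (hV : V ∈ 𝓝 (Pi.single a₀ (finiteRestrict F y))) :
    Dense {g : ι → C₀(A, ℂ) | ∃ n, (fun a : I => (B ^ n) (c0Monomial g a)) ∈ V} := by
  refine dense_closure.1 (dense_setOf_finiteRestrict.mono ?_)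
  rintro _ ⟨H, h, rfl⟩
  set η : ℕ → ℝ := fun k => 1 / (k + 1)
  have hη : Tendsto η atTop (𝓝 0) := tendsto_one_div_add_atTop_nhds_zero_nat
  choose n x hx hxa₀ hxa using fun k : ℕ =>
    hB.exists_perturbation hf hw a₀.1 H F h y (η := η k) (by positivity)
      (div_le_one_of_le₀ (by simp) (by positivity))
  have hxlim : Tendsto (fun k => (fun i => finiteRestrict H (h i)) + x k) atTop
      (𝓝 fun i => finiteRestrict H (h i)) := by
    have : Tendsto x atTop (𝓝 0) := tendsto_pi_nhds.2 fun i =>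
      squeeze_zero_norm (fun k => hx k i) hη
    simpa only [add_zero] using tendsto_const_nhds.add this
  have hmonomial : Tendsto (fun k (a : I) =>
      (B ^ n k) (c0Monomial ((fun i => finiteRestrict H (h i)) + x k) a)) atTop
      (𝓝 (Pi.single a₀ (finiteRestrict F y))) := by
    refine tendsto_pi_nhds.2 fun a => ?_
    by_cases ha : a = a₀
    · subst ha
      simp only [hxa₀, Pi.single_eq_same, tendsto_const_nhds]
    · rw [Pi.single_eq_of_ne ha]
      refine squeeze_zero_norm (fun k => hxa k a.1 (ha₀ a ha)) ?_
      simpa only [zero_mul] using hη.mul_const _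
  refine mem_closure_of_tendsto hxlim ?_
  filter_upwards [hmonomial hV] with k hk
  exact ⟨n k, hk⟩

theorem IsC0WBS.eventually_residual_denseRange_linearCombination [Countable ι]
    (hB : T.IsC0WBS lam B) {f : C₀(A, ℂ)} (hf : DenseRange fun n : ℕ => (B ^ n) f) :
    ∀ᶠ g : ι → C₀(A, ℂ) in residual _, ∀ c : {a : ι →₀ ℕ // a ≠ 0} →₀ ℂ, c ≠ 0 →
      DenseRange fun n : ℕ => (B ^ n) (Finsupp.linearCombination ℂ (c0Monomial g) c) := by
  classical
  have : TopologicalSpace.SeparableSpace C₀(A, ℂ) := ⟨_, Set.countable_range _, hf⟩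
  have := UniformSpace.secondCountable_of_separable C₀(A, ℂ)
  refine _root_.eventually_residual_denseRange_linearCombination continuous_c0Monomial
    dense_range_finiteRestrict fun I hI => ?_
  obtain ⟨w, hw, hinj⟩ := exists_pos_weight_injOn (I.image Subtype.val)
  obtain ⟨a₀, ha₀, hmin⟩ := I.exists_min_image (fun a => Finsupp.weight w a.1) hI
  refine ⟨⟨a₀, ha₀⟩, ?_⟩
  rintro _ ⟨⟨F, y⟩, rfl⟩ V hV
  refine hB.dense_exists_pow_c0Monomial_mem hf hw (fun a ha => ?_) F y hV
  refine (hmin a.1 a.2).lt_of_ne fun heq => ha (Subtype.ext (Subtype.ext ?_))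
  exact (hinj (Finset.mem_image_of_mem _ ha₀) (Finset.mem_image_of_mem _ a.2) heq).symm

end DirTree

theorem stmt9_general {A : Type*} [TopologicalSpace A] [DiscreteTopology A] {T : DirTree A}
    {lam : A → ℂ} {B : C₀(A, ℂ) →L[ℂ] C₀(A, ℂ)} (hB : T.IsC0WBS lam B)
    (hhc : ∃ f : C₀(A, ℂ), DenseRange fun n : ℕ => (B ^ n) f) :
    ∀ᶠ g : ℕ → C₀(A, ℂ) in residual _,
      LinearIndependent ℂ (c0Monomial g) ∧
      Dense (Submodule.span ℂ (Set.range (c0Monomial g)) : Set C₀(A, ℂ)) ∧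
      ∀ f ∈ Submodule.span ℂ (Set.range (c0Monomial g)), f ≠ 0 →
        DenseRange fun n : ℕ => (B ^ n) f := by
  obtain ⟨f₀, hf₀⟩ := hhc
  have : Nonempty A := ⟨T.root⟩
  have : TopologicalSpace.SeparableSpace C₀(A, ℂ) := ⟨_, Set.countable_range _, hf₀⟩
  have := UniformSpace.secondCountable_of_separable C₀(A, ℂ)
  filter_upwards [hB.eventually_residual_denseRange_linearCombination hf₀,
    eventually_residual_denseRange] with g hcomb hdense
  refine ⟨linearIndependent_of_denseRange_linearCombination
    (T := fun n => ((B ^ n : C₀(A, ℂ) →L[ℂ] C₀(A, ℂ)) : C₀(A, ℂ) →ₗ[ℂ] C₀(A, ℂ))) hcomb, ?_, ?_⟩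
  · refine hdense.mono (Set.range_subset_iff.2 fun i => Submodule.subset_span ?_)
    exact ⟨_, c0Monomial_single_one g i⟩
  · intro f hf hf0
    obtain ⟨c, rfl⟩ := Finsupp.mem_span_range_iff_exists_finsupp.1 hf
    exact hcomb c fun hc => hf0 (by rw [hc, Finsupp.sum_zero_index])

/-- Any bounded hypercyclic weighted backward shift on `c₀(A)` over a
rooted directed tree supports a dense, countably generated, free hypercyclic algebra for
the coordinatewise product: there are countably many generators `g i` such that the
(non-unital) algebra they generate — the linear span of the monomials
`M α = ∏_i (g i)^(α i)`, `α ≠ 0` — is dense, the monomials are linearly independent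
(freeness), and every nonzero element of the algebra is a hypercyclic vector. -/
theorem stmt9 {A : Type*} [Countable A] [TopologicalSpace A] [DiscreteTopology A]
    (T : DirTree A) (hleaf : ∀ v : A, (T.chi v).Nonempty)
    (lam : A → ℂ) (hlam : ∀ v, lam v ≠ 0)
    (B : C₀(A, ℂ) →L[ℂ] C₀(A, ℂ))
    (hB : ∀ (f : C₀(A, ℂ)) (v : A), B f v = ∑' u : T.chi v, lam u * f u)
    (hhc : ∃ f : C₀(A, ℂ), Dense (Set.range fun n : ℕ => (B ^ n) f)) :
    ∃ (g : ℕ → C₀(A, ℂ)) (M : {α : ℕ →₀ ℕ // α ≠ 0} → C₀(A, ℂ)),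
      (∀ (α : {α : ℕ →₀ ℕ // α ≠ 0}) (v : A),
        M α v = ∏ i ∈ (α : ℕ →₀ ℕ).support, (g i v) ^ ((α : ℕ →₀ ℕ) i)) ∧
      LinearIndependent ℂ M ∧
      Dense ((Submodule.span ℂ (Set.range M) : Submodule ℂ C₀(A, ℂ)) : Set C₀(A, ℂ)) ∧
      ∀ f ∈ Submodule.span ℂ (Set.range M), f ≠ 0 →
        Dense (Set.range fun n : ℕ => (B ^ n) f) := by
  obtain ⟨g, hg⟩ := (dense_of_mem_residual (stmt9_general hB hhc)).nonempty
  exact ⟨g, c0Monomial g, c0Monomial_apply g, hg⟩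
end

section
/- Let A be the dyadic rooted tree, 1 < p < ∞ with conjugate exponent p*, and let α ∈ (0, (p−1)/p). Define the weight λ by λ(r→v_i) = θ_n(i)^{-α} for each word i of length n (θ_n being the lexicographic position). Then for every vertex v_i of A, ∑_{u∈Chi^N(v_i)} |λ(v_i→u)|^{p*} ≥ 2^{N(1−αp*)} → +∞ as N → ∞. In particular the induced weighted backward shift B_λ is hypercyclic on ℓ^p(A). -/
open Filter Topology
open scoped ENNReal NNReal

/-- Lexicographic position of a word over a two-letter alphabet. -/
def theta (l : List Bool) : ℕ :=
  1 + l.foldl (fun a b => 2 * a + (if b then 1 else 0)) 0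

/-- The weight on the dyadic tree determined by `λ(r → v_i) = θ(i)^{-α}`: the individual
edge weight at a vertex `u ≠ r` is `(θ(Par u)/θ(u))^α`. -/
noncomputable def dyadicWeight (α : ℝ) : List Bool → ℂ :=
  fun u => ((((theta u.dropLast : ℝ) / (theta u : ℝ)) ^ α : ℝ) : ℂ)

/-! A bounded weighted backward shift annihilates every finitely supported function after finitely
many steps, so by the hypercyclicity criterion it suffices that each basis vector `e_v` has
preimages under `B ^ n` of norm tending to `0`. The cheapest preimage supported on `Chi^n(v)` is the
extremizer of Hölder's inequality, and its norm is a negative power of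
`∑_{u ∈ Chi^n(v)} |λ(v → u)|^{p*}`. On the dyadic tree that sum has `2 ^ n` terms, and each is at
least `2 ^ (-n α p*)` because `θ(i, j) ≤ 2 ^ n θ(i)`. -/

theorem exists_dense_range_of_dense_iUnion_preimage {ι X Y : Type*} [TopologicalSpace X]
    [BaireSpace X] [Nonempty X] [TopologicalSpace Y] [SecondCountableTopology Y] {F : ι → X → Y}
    (hF : ∀ i, Continuous (F i))
    (htrans : ∀ U, IsOpen U → U.Nonempty → Dense (⋃ i, F i ⁻¹' U)) :
    ∃ x, Dense (Set.range fun i => F i x) := by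
  have hbasis := TopologicalSpace.isBasis_countableBasis Y
  have hdense : Dense (⋂ U ∈ TopologicalSpace.countableBasis Y, ⋃ i, F i ⁻¹' U) :=
    dense_biInter_of_isOpen
      (fun U hU => isOpen_iUnion fun i => (hbasis.isOpen hU).preimage (hF i))
      (TopologicalSpace.countable_countableBasis Y)
      (fun U hU => htrans U (hbasis.isOpen hU) (TopologicalSpace.nonempty_of_mem_countableBasis hU))
  obtain ⟨x, hx⟩ := hdense.nonempty
  refine ⟨x, hbasis.dense_iff.2 fun U hU _ => ?_⟩
  obtain ⟨i, hi⟩ := Set.mem_iUnion.1 (Set.mem_iInter₂.1 hx U hU)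
  exact ⟨F i x, hi, i, rfl⟩

section Hypercyclicity

variable {𝕜 E : Type*} [NontriviallyNormedField 𝕜] [NormedAddCommGroup E] [NormedSpace 𝕜 E]

/-- An operator is hypercyclic if one of its orbits is dense. -/
def IsHypercyclic (B : E →L[𝕜] E) : Prop :=
  ∃ f, Dense (Set.range fun n : ℕ => (B ^ n) f)

theorem isHypercyclic_of_dense_of_dense [CompleteSpace E] [TopologicalSpace.SeparableSpace E]
    {B : E →L[𝕜] E} {l : Filter ℕ} [l.NeBot]
    (hnull : Dense {x | Tendsto (fun n => (B ^ n) x) l (𝓝 0)})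
    (hlift : Dense {y | ∀ ε > 0, ∀ᶠ n in l, ∃ z, ‖z‖ < ε ∧ (B ^ n) z = y}) :
    IsHypercyclic B := by
  have : SecondCountableTopology E := UniformSpace.secondCountable_of_separable E
  refine exists_dense_range_of_dense_iUnion_preimage (fun n => (B ^ n).continuous)
    fun U hU hUne => dense_iff_inter_open.2 fun V hV hVne => ?_
  obtain ⟨x, hxV, hx⟩ := hnull.inter_open_nonempty V hV hVne
  obtain ⟨y, hyU, hy⟩ := hlift.inter_open_nonempty U hU hUne
  obtain ⟨ε, hε, hball⟩ := Metric.isOpen_iff.1 hV x hxV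
  have hxy : Tendsto (fun n => (B ^ n) x + y) l (𝓝 y) := by
    simpa only [zero_add] using hx.add_const y
  obtain ⟨n, ⟨z, hz, rfl⟩, hn⟩ := ((hy ε hε).and (hxy.eventually_mem (hU.mem_nhds hyU))).exists
  refine ⟨x + z, hball (by simpa using hz), Set.mem_iUnion.2 ⟨n, ?_⟩⟩
  rwa [Set.mem_preimage, map_add]

end Hypercyclicity

section LpSpace

variable {ι : Type*} {E : ι → Type*} [∀ i, NormedAddCommGroup (E i)] {p : ℝ≥0∞} [Fact (1 ≤ p)]

theorem dense_setOf_of_add_of_lp_single [DecidableEq ι] (hp : p ≠ ∞) {P : lp E p → Prop}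
    (hzero : P 0) (hadd : ∀ f g, P f → P g → P (f + g)) (hsingle : ∀ i a, P (lp.single p i a)) :
    Dense {f | P f} := fun f =>
  mem_closure_of_tendsto (lp.hasSum_single hp f) <| Eventually.of_forall fun _ =>
    Finset.sum_induction _ P hadd hzero fun i _ => hsingle i (f i)

theorem separableSpace_lp [Countable ι] [∀ i, TopologicalSpace.SeparableSpace (E i)]
    (hp : p ≠ ∞) : TopologicalSpace.SeparableSpace (lp E p) := by
  classical
  let S : Submodule ℤ (lp E p) := Submodule.span ℤ (⋃ i, Set.range (lp.single p i))
  have hdense : Dense (S : Set (lp E p)) :=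
    dense_setOf_of_add_of_lp_single hp S.zero_mem (fun _ _ => S.add_mem) fun i a =>
      Submodule.subset_span (Set.mem_iUnion.2 ⟨i, a, rfl⟩)
  have hsep : TopologicalSpace.IsSeparable (S : Set (lp E p)) :=
    (TopologicalSpace.IsSeparable.iUnion fun i =>
      TopologicalSpace.isSeparable_range (lp.isometry_single i).continuous).span
  rw [← TopologicalSpace.isSeparable_univ_iff, ← hdense.closure_eq]
  exact hsep.closure

end LpSpace

theorem exists_sum_mul_eq_one_and_sum_norm_rpow_eq {ι 𝕜 : Type*} [RCLike 𝕜] {p q : ℝ}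
    (hpq : p.HolderConjugate q) (w : ι → 𝕜) {s : Finset ι} (hw : 0 < ∑ i ∈ s, ‖w i‖ ^ q) :
    ∃ c : ι → 𝕜, ∑ i ∈ s, w i * c i = 1 ∧
      ∑ i ∈ s, ‖c i‖ ^ p = (∑ i ∈ s, ‖w i‖ ^ q) ^ (1 - p) := by
  set σ := ∑ i ∈ s, ‖w i‖ ^ q with hσ
  -- The equality case of Hölder's inequality; where `w i = 0`, division by zero gives `c i = 0`.
  refine ⟨fun i => ((‖w i‖ ^ q / σ : ℝ) : 𝕜) / w i, ?_, ?_⟩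
  · have hterm (i : ι) : w i * (((‖w i‖ ^ q / σ : ℝ) : 𝕜) / w i) = ((‖w i‖ ^ q / σ : ℝ) : 𝕜) := by
      refine mul_div_cancel_of_imp' fun hi => ?_
      rw [hi, norm_zero, Real.zero_rpow hpq.symm.ne_zero, zero_div, RCLike.ofReal_zero]
    rw [Finset.sum_congr rfl fun i _ => hterm i, ← RCLike.ofReal_sum, ← Finset.sum_div, ← hσ,
      div_self hw.ne', RCLike.ofReal_one]
  · have hterm (i : ι) : ‖((‖w i‖ ^ q / σ : ℝ) : 𝕜) / w i‖ ^ p = ‖w i‖ ^ q / σ ^ p := by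
      rw [norm_div, RCLike.norm_of_nonneg (by positivity), div_right_comm,
        Real.div_rpow (by positivity) hw.le]
      congr 1
      rcases (norm_nonneg (w i)).eq_or_lt with hi | hi
      · rw [← hi, div_zero, Real.zero_rpow hpq.ne_zero, Real.zero_rpow hpq.symm.ne_zero]
      · rw [← Real.rpow_sub_one hi.ne', ← Real.rpow_mul hi.le, hpq.symm.sub_one_mul_conj]
    rw [Finset.sum_congr rfl fun i _ => hterm i, ← Finset.sum_div, ← hσ, Real.rpow_sub hw,
      Real.rpow_one]

namespace DirTree

section WeightedShift

variable {A : Type*} {T : DirTree A} {lam : A → ℂ} {n : ℕ} {u v : A}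

theorem mem_chiIter_succ :
    u ∈ T.chiIter (n + 1) v ↔ u ≠ T.root ∧ T.par u ∈ T.chiIter n v := by
  simp [chiIter, chi, and_comm]

theorem wt_succ (T : DirTree A) (lam : A → ℂ) (n : ℕ) (u : A) :
    T.wt lam (n + 1) u = lam u * T.wt lam n (T.par u) := by
  simp only [wt, Finset.prod_range_succ', Function.iterate_succ_apply, Function.iterate_zero_apply,
    mul_comm]

theorem exists_finset_lt_sum_norm_wt_rpow {q M : ℝ} (hq : 0 ≤ q)
    (h : ENNReal.ofReal M < ∑' u : T.chiIter n v, ‖T.wt lam n u‖ₑ ^ q) :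
    ∃ s : Finset A, ↑s ⊆ T.chiIter n v ∧ M < ∑ u ∈ s, ‖T.wt lam n u‖ ^ q := by
  rw [ENNReal.tsum_eq_iSup_sum, lt_iSup_iff] at h
  obtain ⟨t, ht⟩ := h
  refine ⟨t.map (Function.Embedding.subtype _), by simp, ?_⟩
  have hterm (u : A) : ‖T.wt lam n u‖ₑ ^ q = ENNReal.ofReal (‖T.wt lam n u‖ ^ q) := by
    rw [← ENNReal.ofReal_rpow_of_nonneg (norm_nonneg _) hq, ofReal_norm]
  simp only [hterm] at ht
  rw [← ENNReal.ofReal_sum_of_nonneg fun _ _ => by positivity] at ht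
  simpa using (ENNReal.ofReal_lt_ofReal_iff'.1 ht).1

namespace IsWBS

variable {p : ℝ≥0∞} [Fact (1 ≤ p)] {B : lp (fun _ : A => ℂ) p →L[ℂ] lp (fun _ : A => ℂ) p}
  {q : ℝ} {l : Filter ℕ}

section DecidableEq

variable [DecidableEq A]

theorem apply_single_apply (hB : T.IsWBS lam B) (u v : A) (a : ℂ) :
    (B (lp.single p u a) : ∀ _ : A, ℂ) v = (T.chi v).indicator (fun w => lam w * a) u := by
  let g : A → ℂ := fun w => lam w * (Pi.single u a : A → ℂ) w
  have hg (w : A) (hw : w ≠ u) : (T.chi v).indicator g w = 0 :=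
    Set.indicator_apply_eq_zero.2 fun _ => by simp only [g, Pi.single_eq_of_ne hw, mul_zero]
  calc (B (lp.single p u a) : ∀ _ : A, ℂ) v
      = ∑' w : T.chi v, g w := hB _ v
    _ = (T.chi v).indicator g u := by rw [tsum_subtype _ g, tsum_eq_single u hg]
    _ = (T.chi v).indicator (fun w => lam w * a) u := by
      simp only [g, Set.indicator, Pi.single_eq_same]

theorem apply_single_root (hB : T.IsWBS lam B) (a : ℂ) : B (lp.single p T.root a) = 0 := by
  ext v
  rw [hB.apply_single_apply, Set.indicator_of_notMem fun hv => hv.1 rfl]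
  rfl

theorem apply_single (hB : T.IsWBS lam B) (hu : u ≠ T.root) (a : ℂ) :
    B (lp.single p u a) = lp.single p (T.par u) (lam u * a) := by
  ext v
  rw [hB.apply_single_apply, lp.single_apply]
  by_cases huv : T.par u = v
  · subst huv
    rw [Set.indicator_of_mem (show u ∈ T.chi (T.par u) from ⟨hu, rfl⟩), Pi.single_eq_same]
  · rw [Set.indicator_of_notMem fun h => huv h.2, Pi.single_eq_of_ne (Ne.symm huv)]

theorem pow_apply_single (hB : T.IsWBS lam B) (hu : u ∈ T.chiIter n v) (a : ℂ) :
    (B ^ n) (lp.single p u a) = lp.single p v (T.wt lam n u * a) := by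
  induction n generalizing u a with
  | zero =>
    obtain rfl : u = v := hu
    simp [wt]
  | succ n ih =>
    obtain ⟨hroot, hpar⟩ := mem_chiIter_succ.1 hu
    rw [pow_succ, mul_apply_eq_comp, hB.apply_single hroot, ih hpar, wt_succ, mul_left_comm,
      mul_assoc]

theorem pow_succ_apply_single_eq_zero (hB : T.IsWBS lam B) (hu : T.par^[n] u = T.root) (a : ℂ) :
    (B ^ (n + 1)) (lp.single p u a) = 0 := by
  induction n generalizing u a with
  | zero =>
    obtain rfl : u = T.root := hu
    rw [zero_add, pow_one, hB.apply_single_root]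
  | succ n ih =>
    rw [pow_succ, mul_apply_eq_comp]
    by_cases hroot : u = T.root
    · rw [hroot, hB.apply_single_root, map_zero]
    · rw [hB.apply_single hroot, ih hu]

theorem tendsto_pow_apply_single (hB : T.IsWBS lam B) (u : A) (a : ℂ) :
    Tendsto (fun n => (B ^ n) (lp.single p u a)) atTop (𝓝 0) := by
  obtain ⟨m, hm⟩ := T.reaches u
  refine tendsto_nhds_of_eventually_eq ((eventually_ge_atTop (m + 1)).mono fun n hn => ?_)
  rw [← Nat.sub_add_cancel hn, pow_add, mul_apply_eq_comp,
    hB.pow_succ_apply_single_eq_zero hm, map_zero]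

theorem exists_pow_apply_eq_single (hB : T.IsWBS lam B)
    (hpq : p.toReal.HolderConjugate q) {s : Finset A} (hs : ↑s ⊆ T.chiIter n v)
    (hpos : 0 < ∑ u ∈ s, ‖T.wt lam n u‖ ^ q) (a : ℂ) :
    ∃ z, (B ^ n) z = lp.single p v a ∧
      ‖z‖ ^ p.toReal = (∑ u ∈ s, ‖T.wt lam n u‖ ^ q) ^ (1 - p.toReal) * ‖a‖ ^ p.toReal := by
  obtain ⟨c, hc, hnorm⟩ := exists_sum_mul_eq_one_and_sum_norm_rpow_eq hpq (T.wt lam n) hpos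
  refine ⟨∑ u ∈ s, lp.single p u (c u * a), ?_, ?_⟩
  · have hlin (f : A → ℂ) : ∑ u ∈ s, lp.single (E := fun _ : A => ℂ) p v (f u) =
        lp.single p v (∑ u ∈ s, f u) :=
      (map_sum (lp.singleAddMonoidHom (E := fun _ : A => ℂ) p v) f s).symm
    rw [map_sum, Finset.sum_congr rfl fun u hu => hB.pow_apply_single (hs hu) _, hlin]
    simp only [← mul_assoc, ← Finset.sum_mul, hc, one_mul]
  · rw [lp.norm_sum_single hpq.pos (fun u => c u * a), ← hnorm, Finset.sum_mul]
    simp only [norm_mul, Real.mul_rpow (norm_nonneg _) (norm_nonneg _)]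

theorem eventually_exists_norm_lt_pow_apply_eq_single (hB : T.IsWBS lam B)
    (hpq : p.toReal.HolderConjugate q)
    (hv : Tendsto (fun n => ∑' u : T.chiIter n v, ‖T.wt lam n u‖ₑ ^ q) l (𝓝 ∞))
    (a : ℂ) {ε : ℝ} (hε : 0 < ε) :
    ∀ᶠ n in l, ∃ z, ‖z‖ < ε ∧ (B ^ n) z = lp.single p v a := by
  have hsmall : Tendsto (fun σ : ℝ => σ ^ (1 - p.toReal) * ‖a‖ ^ p.toReal) atTop (𝓝 0) := by
    simpa using (tendsto_rpow_neg_atTop hpq.sub_one_pos).mul_const (‖a‖ ^ p.toReal)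
  obtain ⟨M, hM⟩ := eventually_atTop.1
    ((hsmall.eventually_lt_const (Real.rpow_pos_of_pos hε p.toReal)).and (eventually_gt_atTop 0))
  filter_upwards [hv.eventually_const_lt (ENNReal.ofReal_lt_top (r := M))] with n hn
  obtain ⟨s, hs, hMs⟩ := exists_finset_lt_sum_norm_wt_rpow hpq.symm.nonneg hn
  obtain ⟨hlt, hpos⟩ := hM _ hMs.le
  obtain ⟨z, hz, hnorm⟩ := hB.exists_pow_apply_eq_single hpq hs hpos a
  exact ⟨z, (Real.rpow_lt_rpow_iff (norm_nonneg z) hε.le hpq.pos).1 (hnorm ▸ hlt), hz⟩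

end DecidableEq

/-- Divergence along a sequence `n k → ∞` is the case `l = map n atTop`. -/
theorem isHypercyclic [Countable A] (hB : T.IsWBS lam B) (hpq : p.toReal.HolderConjugate q)
    [l.NeBot] (hl : l ≤ atTop)
    (hdiv : ∀ v, Tendsto (fun n => ∑' u : T.chiIter n v, ‖T.wt lam n u‖ₑ ^ q) l (𝓝 ∞)) :
    IsHypercyclic B := by
  classical
  have hp : p ≠ ∞ := (ENNReal.toReal_pos_iff.1 hpq.pos).2.ne
  have := separableSpace_lp (E := fun _ : A => ℂ) hp
  refine isHypercyclic_of_dense_of_dense (l := l)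
    (dense_setOf_of_add_of_lp_single hp ?_ ?_ ?_) (dense_setOf_of_add_of_lp_single hp ?_ ?_ ?_)
  · simp
  · intro f g hf hg
    simpa using hf.add hg
  · exact fun u a => (hB.tendsto_pow_apply_single u a).mono_left hl
  · exact fun ε hε => .of_forall fun n => ⟨0, by simpa using hε, map_zero _⟩
  · intro f g hf hg ε hε
    filter_upwards [hf (ε / 2) (half_pos hε), hg (ε / 2) (half_pos hε)]
    rintro n ⟨y, hy, rfl⟩ ⟨z, hz, rfl⟩
    exact ⟨y + z, (norm_add_le y z).trans_lt (by linarith), map_add _ y z⟩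
  · exact fun v a ε hε => hB.eventually_exists_norm_lt_pow_apply_eq_single hpq (hdiv v) a hε

end IsWBS

end WeightedShift

end DirTree

section Theta

theorem cast_theta_pos (l : List Bool) : (0 : ℝ) < theta l :=
  Nat.cast_pos.2 (Nat.add_pos_left one_pos _)

theorem theta_append_singleton_le (l : List Bool) (b : Bool) :
    theta (l ++ [b]) ≤ 2 * theta l := by
  simp only [theta, List.foldl_append, List.foldl_cons, List.foldl_nil]
  split <;> omega

theorem theta_append_le (i j : List Bool) : theta (i ++ j) ≤ 2 ^ j.length * theta i := by
  induction j using List.reverseRecOn with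
  | nil => simp
  | append_singleton j b ih =>
    calc theta (i ++ (j ++ [b]))
        = theta (i ++ j ++ [b]) := by rw [List.append_assoc]
      _ ≤ 2 * theta (i ++ j) := theta_append_singleton_le _ b
      _ ≤ 2 * (2 ^ j.length * theta i) := by gcongr
      _ = 2 ^ (j ++ [b]).length * theta i := by
        rw [List.length_append, List.length_singleton, pow_succ', mul_assoc]

theorem inv_two_pow_le_theta_div_theta_append (i j : List Bool) :
    ((2 : ℝ) ^ j.length)⁻¹ ≤ theta i / theta (i ++ j) := by
  rw [le_div_iff₀ (cast_theta_pos _), inv_mul_le_iff₀ (by positivity)]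
  exact_mod_cast theta_append_le i j

variable {s : ℝ}

theorem two_rpow_le_sum_theta_div_theta_rpow (hs : 0 ≤ s) (i : List Bool) (N : ℕ) :
    (2 : ℝ) ^ ((N : ℝ) * (1 - s)) ≤
      ∑ j : Fin N → Bool, ((theta i : ℝ) / (theta (i ++ List.ofFn j) : ℝ)) ^ s :=
  calc (2 : ℝ) ^ ((N : ℝ) * (1 - s))
      = ∑ _j : Fin N → Bool, (((2 : ℝ) ^ N)⁻¹) ^ s := by
        rw [mul_one_sub, Real.rpow_sub two_pos, Real.rpow_mul zero_le_two, Real.rpow_natCast,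
          Real.inv_rpow (by positivity)]
        simp [div_eq_mul_inv]
    _ ≤ _ := Finset.sum_le_sum fun j _ => by
        have hj := inv_two_pow_le_theta_div_theta_append i (List.ofFn j)
        rw [List.length_ofFn] at hj
        gcongr

theorem tendsto_sum_theta_div_theta_rpow_atTop (hs₀ : 0 ≤ s) (hs₁ : s < 1) (i : List Bool) :
    Tendsto (fun N : ℕ => ∑ j : Fin N → Bool,
      ((theta i : ℝ) / (theta (i ++ List.ofFn j) : ℝ)) ^ s) atTop atTop :=
  tendsto_atTop_mono (two_rpow_le_sum_theta_div_theta_rpow hs₀ i) <|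
    (tendsto_rpow_atTop_of_base_gt_one 2 one_lt_two).comp <|
      tendsto_natCast_atTop_atTop.atTop_mul_const (sub_pos.2 hs₁)

end Theta

namespace DirTree

section Dyadic

variable {T : DirTree (List Bool)}

theorem mem_chiIter_iff_exists_append (hroot : T.root = []) (hpar : T.par = List.dropLast) {N : ℕ}
    {u i : List Bool} : u ∈ T.chiIter N i ↔ ∃ j : List Bool, j.length = N ∧ i ++ j = u := by
  induction N generalizing u with
  | zero => simp [chiIter, eq_comm]
  | succ N ih =>
    rw [mem_chiIter_succ, hroot, hpar, ih]
    constructor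
    · rintro ⟨hu, j, hj, hju⟩
      refine ⟨j ++ [u.getLast hu], by simp [hj], ?_⟩
      rw [← List.append_assoc, hju, List.dropLast_append_getLast]
    · rintro ⟨j, hj, rfl⟩
      have hj₀ : j ≠ [] := List.ne_nil_of_length_eq_add_one hj
      exact ⟨by simp [hj₀], j.dropLast, by simp [hj], (List.dropLast_append_of_ne_nil hj₀).symm⟩

theorem chiIter_eq_range_append_ofFn (hroot : T.root = []) (hpar : T.par = List.dropLast) (N : ℕ)
    (i : List Bool) : T.chiIter N i = Set.range fun j : Fin N → Bool => i ++ List.ofFn j := by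
  ext u
  rw [mem_chiIter_iff_exists_append hroot hpar]
  constructor
  · rintro ⟨j, rfl, rfl⟩
    exact ⟨j.get, by simp⟩
  · rintro ⟨j, rfl⟩
    exact ⟨List.ofFn j, List.length_ofFn, rfl⟩

theorem wt_dyadicWeight_append (hpar : T.par = List.dropLast) (α : ℝ) (i j : List Bool) :
    T.wt (dyadicWeight α) j.length (i ++ j) =
      (((theta i : ℝ) / theta (i ++ j)) ^ α : ℝ) := by
  induction j using List.reverseRecOn with
  | nil => simp [wt, (cast_theta_pos i).ne']
  | append_singleton j b ih =>
    rw [List.length_append, List.length_singleton, wt_succ, hpar, ← List.append_assoc,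
      List.dropLast_concat, ih, dyadicWeight, List.dropLast_concat, ← Complex.ofReal_mul,
      ← Real.mul_rpow (by positivity) (by positivity), mul_comm,
      div_mul_div_cancel₀ (cast_theta_pos (i ++ j)).ne']

theorem tsum_enorm_wt_dyadicWeight_rpow (hroot : T.root = []) (hpar : T.par = List.dropLast)
    (α q : ℝ) (N : ℕ) (i : List Bool) :
    ∑' u : T.chiIter N i, ‖T.wt (dyadicWeight α) N u‖ₑ ^ q =
      ENNReal.ofReal (∑ j : Fin N → Bool,
        ((theta i : ℝ) / (theta (i ++ List.ofFn j) : ℝ)) ^ (α * q)) := by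
  have hinj : Function.Injective fun j : Fin N → Bool => i ++ List.ofFn j :=
    (List.append_right_injective i).comp List.ofFn_injective
  rw [chiIter_eq_range_append_ofFn hroot hpar,
    tsum_range (fun u => ‖T.wt (dyadicWeight α) N u‖ₑ ^ q) hinj, tsum_fintype,
    ENNReal.ofReal_sum_of_nonneg fun _ _ => by positivity]
  refine Finset.sum_congr rfl fun j _ => ?_
  have hratio : 0 < (theta i : ℝ) / theta (i ++ List.ofFn j) :=
    div_pos (cast_theta_pos _) (cast_theta_pos _)
  have hwt := wt_dyadicWeight_append hpar α i (List.ofFn j)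
  rw [List.length_ofFn] at hwt
  rw [hwt, ← ofReal_norm, Complex.norm_real, Real.norm_of_nonneg (by positivity),
    ENNReal.ofReal_rpow_of_pos (by positivity), ← Real.rpow_mul hratio.le]

theorem IsWBS.isHypercyclic_of_dyadicWeight {p : ℝ≥0∞} [Fact (1 ≤ p)] {α q : ℝ}
    {B : lp (fun _ : List Bool => ℂ) p →L[ℂ] lp (fun _ : List Bool => ℂ) p}
    (hroot : T.root = []) (hpar : T.par = List.dropLast) (hB : T.IsWBS (dyadicWeight α) B)
    (hpq : p.toReal.HolderConjugate q) (hα₀ : 0 ≤ α) (hα₁ : α * q < 1) : IsHypercyclic B := by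
  refine hB.isHypercyclic hpq le_rfl fun i => ?_
  simp only [tsum_enorm_wt_dyadicWeight_rpow hroot hpar]
  exact ENNReal.tendsto_ofReal_nhds_top.2
    (tendsto_sum_theta_div_theta_rpow_atTop (mul_nonneg hα₀ hpq.symm.nonneg) hα₁ i)

end Dyadic

end DirTree

/-- On the dyadic rooted tree with weight `λ(r→v_i) = θ_n(i)^{-α}`,
`0 < α < (p−1)/p`, one has `∑_{u ∈ Chi^N(v_i)} |λ(v_i→u)|^{p*} ≥ 2^{N(1−αp*)} → ∞`; in
particular the induced weighted backward shift is hypercyclic on `ℓ^p` of the dyadic tree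
(the tree on finite words over a two-letter alphabet, with parent map `List.dropLast`). -/
theorem stmt13 (p : ℝ≥0∞) [Fact (1 ≤ p)] (hp1 : 1 < p) (hp2 : p ≠ ∞)
    (α : ℝ) (hα1 : 0 < α) (hα2 : α < (p.toReal - 1) / p.toReal) :
    (∀ (i : List Bool) (N : ℕ),
      (2 : ℝ) ^ ((N : ℝ) * (1 - α * (p.toReal / (p.toReal - 1)))) ≤
        ∑ j : Fin N → Bool,
          ((theta i : ℝ) / (theta (i ++ List.ofFn j) : ℝ)) ^ (α * (p.toReal / (p.toReal - 1)))) ∧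
    (∀ i : List Bool,
      Tendsto (fun N : ℕ => ∑ j : Fin N → Bool,
          ((theta i : ℝ) / (theta (i ++ List.ofFn j) : ℝ)) ^ (α * (p.toReal / (p.toReal - 1))))
        atTop atTop) ∧
    (∀ T : DirTree (List Bool), T.root = [] → T.par = List.dropLast →
      ∀ B : lp (fun _ : List Bool => ℂ) p →L[ℂ] lp (fun _ : List Bool => ℂ) p,
        T.IsWBS (dyadicWeight α) B →
        ∃ f : lp (fun _ : List Bool => ℂ) p,
          Dense (Set.range fun n : ℕ => (B ^ n) f)) := by
  have hp : 1 < p.toReal := by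
    rwa [← ENNReal.toReal_one, ENNReal.toReal_lt_toReal ENNReal.one_ne_top hp2]
  have hpq : p.toReal.HolderConjugate (p.toReal / (p.toReal - 1)) := .conjExponent hp
  have hs₀ : 0 ≤ α * (p.toReal / (p.toReal - 1)) := mul_nonneg hα1.le hpq.symm.nonneg
  have hs₁ : α * (p.toReal / (p.toReal - 1)) < 1 := by
    rwa [← lt_div_iff₀ hpq.symm.pos, one_div_div]
  exact ⟨two_rpow_le_sum_theta_div_theta_rpow hs₀, tendsto_sum_theta_div_theta_rpow_atTop hs₀ hs₁,
    fun _ hroot hpar _ hB => hB.isHypercyclic_of_dyadicWeight hroot hpar hpq hα1.le hs₁⟩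
end
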